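/- Let U, W be finite sets, P_U ∈ Δ(U), P_W ∈ Δ(W), R ≥ 0, η > 0, and δ > 0 satisfying 3δ·log(4(|U||W|-1)/δ) < η. Suppose U^n ~ P_U^{⊗n} and, independently, W^n(m) ~ P_W^{⊗n} for m ∈ {1,...,⌈2^{nR}⌉}. Then the probability that there exists m such that the empirical joint distribution Q^n_m of (U^n, W^n(m)) lies in Q_δ^+(R+η) is at most |K̃| · 2^{-n(η - 3δ log(4(|U||W|-1)/δ))}, where K̃ is a finite δ-cover of Q_δ^+(R+η) by interior distributions with min mass ≥ δ/(4(|U||W|-1)); in particular this probability tends to 0 as n → ∞. -/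

import Mathlib

/-! The theorem is a union bound followed by a change of measure.

By the union bound over `m` and over the elements of the cover, it suffices to bound, for each cover
element `q = Qt k`, the probability under `PU^n × PW^n` that the type `Q` of `(u, w)` lies in
`Qplus` within `ℓ¹`-distance `δ` of `q`. With `L = log₂ (4(|U||W|-1)/δ)`, on that event
`PU^n(u) PW^n(w) ≤ 2^{-n(R + η - 2δL)} q^n(u, w)` (`prob_le_tilted`). Indeed `1/n` times the
log-likelihood ratio is
`I(Q) + D(Q_U‖PU) + D(Q_W‖PW) - D(Q‖q)`, the two marginal divergences are nonnegative
(`gibbs`), and `D(Q‖q) ≤ 2δL` since `q ≥ 2^{-L}` (`kl_le`).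

Summing over `(u, w)` and over the `⌈2^{nR}⌉ ≤ 2 · 2^{nR}` indices `m` leaves a spurious factor `2`.
If `1 ≤ nδL` it is absorbed by the remaining `2^{nδL}`. Otherwise `nδ < 1` (as `L ≥ 1`), and then all
types in the ball around `q` have the same count `c` at any given symbol. Positivity of the mutual
information provides a symbol with `0 < c < n`, and a binomial variable takes such a value with
probability at most `1/2` (`binomial_le_half`), which cancels the factor `2`. -/

open Finset Real Filter
open scoped Classical

noncomputable section

/-- Empirical joint distribution of a pair of sequences. -/
def empDist {U W : Type} [Fintype U] [Fintype W] [DecidableEq U] [DecidableEq W]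
    {n : ℕ} (un : Fin n → U) (wn : Fin n → W) : U × W → ℝ :=
  fun p => ((univ.filter (fun t : Fin n => un t = p.1 ∧ wn t = p.2)).card : ℝ) / n

/-- U-marginal of a joint distribution. -/
def margU {U W : Type} [Fintype W] (Q : U × W → ℝ) : U → ℝ := fun u => ∑ w, Q (u, w)

/-- W-marginal of a joint distribution. -/
def margW {U W : Type} [Fintype U] (Q : U × W → ℝ) : W → ℝ := fun w => ∑ u, Q (u, w)

/-- Mutual information (base 2) of a joint distribution. -/
def MI {U W : Type} [Fintype U] [Fintype W] (Q : U × W → ℝ) : ℝ :=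
  ∑ p : U × W, Q p * logb 2 (Q p / (margU Q p.1 * margW Q p.2))

/-- The set `Q_δ^+(r)` of joint distributions with marginals δ-close to `PU`, `PW`
and mutual information at least `r`. -/
def Qplus {U W : Type} [Fintype U] [Fintype W] (PU : U → ℝ) (PW : W → ℝ)
    (δ r : ℝ) : Set (U × W → ℝ) :=
  {Q | (∀ p, 0 ≤ Q p) ∧ (∑ p, Q p = 1) ∧
    (∑ u, |margU Q u - PU u| ≤ δ) ∧ (∑ w, |margW Q w - PW w| ≤ δ) ∧ r ≤ MI Q}

/-! ### Entropy inequalities -/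

lemma mul_log_sub_le {a b : ℝ} (ha : 0 ≤ a) (hb : 0 ≤ b) (hab : 0 < a → 0 < b) :
    a * (log b - log a) ≤ b - a := by
  rcases ha.eq_or_lt with rfl | ha
  · simpa using hb
  · have hb := hab ha
    have h := Real.log_le_sub_one_of_pos (div_pos hb ha)
    rw [Real.log_div hb.ne' ha.ne'] at h
    calc a * (log b - log a) ≤ a * (b / a - 1) := mul_le_mul_of_nonneg_left h ha.le
      _ = b - a := by field_simp

lemma gibbs {ι : Type} [Fintype ι] (a b : ι → ℝ) (ha : ∀ i, 0 ≤ a i) (hb : ∀ i, 0 ≤ b i)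
    (ha1 : ∑ i, a i = 1) (hb1 : ∑ i, b i = 1) (hab : ∀ i, 0 < a i → 0 < b i) :
    ∑ i, a i * (log (b i) - log (a i)) ≤ 0 := by
  calc _ ≤ ∑ i, (b i - a i) := Finset.sum_le_sum fun i _ => mul_log_sub_le (ha i) (hb i) (hab i)
    _ = 0 := by rw [Finset.sum_sub_distrib, ha1, hb1, sub_self]

/-- The divergence `D(Q‖q)` is small when `Q` is `ℓ¹`-close to `q` and `q ≥ ε`. Only the symbols
with `Q > q` contribute positively, each at most `(Q - q)(log (1/ε) + 1)`, and the positive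
part of `Q - q` has total mass at most `δ / 2`. -/
lemma kl_le {ι : Type} [Fintype ι] (Q q : ι → ℝ) (hQ : ∀ i, 0 ≤ Q i)
    (hQ1 : ∑ i, Q i = 1) (hq1 : ∑ i, q i = 1) {ε δ : ℝ} (hε : 0 < ε) (hε2 : ε ≤ 1 / 2)
    (hq : ∀ i, ε ≤ q i) (hd : ∑ i, |q i - Q i| ≤ δ) :
    ∑ i, Q i * (log (Q i) - log (q i)) ≤ 2 * δ * log (1 / ε) := by
  have hΛ : 1 ≤ 3 * log (1 / ε) := by
    have h1 : log 2 ≤ log (1 / ε) := by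
      apply Real.log_le_log (by norm_num)
      rw [le_div_iff₀ hε]; linarith
    have := Real.log_two_gt_d9
    linarith
  have hδ0 : 0 ≤ δ := le_trans (Finset.sum_nonneg fun i _ => abs_nonneg _) hd
  have hterm : ∀ i, Q i * (log (Q i) - log (q i)) ≤
      (|q i - Q i| + (Q i - q i)) / 2 * (log (1 / ε) + 1) := by
    intro i
    have hqi : 0 < q i := lt_of_lt_of_le hε (hq i)
    rcases le_or_gt (Q i) (q i) with h | h
    · rw [abs_of_nonneg (sub_nonneg.2 h)]
      have h2 : Q i * (log (Q i) - log (q i)) ≤ 0 := by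
        rcases (hQ i).eq_or_lt with h0 | h0
        · rw [← h0]; simp
        · exact mul_nonpos_of_nonneg_of_nonpos (hQ i) (sub_nonpos.2 (Real.log_le_log h0 h))
      calc _ ≤ 0 := h2
        _ = _ := by ring
    · rw [abs_of_neg (sub_neg.2 h)]
      have hQi : 0 < Q i := hqi.trans h
      have hQle : Q i ≤ 1 := hQ1 ▸ Finset.single_le_sum (fun j _ => hQ j) (Finset.mem_univ i)
      have h1 : q i * (log (Q i) - log (q i)) ≤ Q i - q i :=
        mul_log_sub_le hqi.le hQi.le fun _ => hQi
      have h2 : log (Q i) - log (q i) ≤ log (1 / ε) := by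
        have h3 := Real.log_nonpos hQi.le hQle
        have h4 := Real.log_le_log hε (hq i)
        rw [one_div, Real.log_inv]; linarith
      have h3 : (Q i - q i) * (log (Q i) - log (q i)) ≤ (Q i - q i) * log (1 / ε) :=
        mul_le_mul_of_nonneg_left h2 (sub_nonneg.2 h.le)
      nlinarith
  calc _ ≤ ∑ i, (|q i - Q i| + (Q i - q i)) / 2 * (log (1 / ε) + 1) :=
        Finset.sum_le_sum fun i _ => hterm i
    _ = (∑ i, |q i - Q i|) / 2 * (log (1 / ε) + 1) := by
        rw [← Finset.sum_mul, ← Finset.sum_div, Finset.sum_add_distrib, Finset.sum_sub_distrib,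
          hQ1, hq1]
        ring
    _ ≤ δ / 2 * (log (1 / ε) + 1) := by gcongr; linarith
    _ ≤ _ := by nlinarith

lemma abs_sub_le_half {ι : Type} [Fintype ι] (Q q : ι → ℝ)
    (hQ1 : ∑ i, Q i = 1) (hq1 : ∑ i, q i = 1) {δ : ℝ}
    (hd : ∑ i, |q i - Q i| ≤ δ) (a : ι) : |q a - Q a| ≤ δ / 2 := by
  have h0 : ∑ i, (q i - Q i) = 0 := by rw [Finset.sum_sub_distrib, hQ1, hq1, sub_self]
  have h1 : |q a - Q a| + (q a - Q a) ≤ ∑ i, (|q i - Q i| + (q i - Q i)) :=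
    Finset.single_le_sum (f := fun i => |q i - Q i| + (q i - Q i))
      (fun i _ => by have := neg_abs_le (q i - Q i); linarith) (Finset.mem_univ a)
  have h2 : |q a - Q a| - (q a - Q a) ≤ ∑ i, (|q i - Q i| - (q i - Q i)) :=
    Finset.single_le_sum (f := fun i => |q i - Q i| - (q i - Q i))
      (fun i _ => by have := le_abs_self (q i - Q i); linarith) (Finset.mem_univ a)
  rw [Finset.sum_add_distrib, h0] at h1
  rw [Finset.sum_sub_distrib, h0] at h2
  rcases abs_cases (q a - Q a) with h | h <;> linarith

/-! ### Marginals and mutual information -/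

lemma le_margU {U W : Type} [Fintype W] (Q : U × W → ℝ) (hQ : ∀ p, 0 ≤ Q p)
    (p : U × W) : Q p ≤ margU Q p.1 :=
  Finset.single_le_sum (f := fun w => Q (p.1, w)) (fun _ _ => hQ _) (Finset.mem_univ p.2)

lemma le_margW {U W : Type} [Fintype U] (Q : U × W → ℝ) (hQ : ∀ p, 0 ≤ Q p)
    (p : U × W) : Q p ≤ margW Q p.2 :=
  Finset.single_le_sum (f := fun u => Q (u, p.2)) (fun _ _ => hQ _) (Finset.mem_univ p.1)

lemma margU_nonneg {U W : Type} [Fintype W] (Q : U × W → ℝ) (hQ : ∀ p, 0 ≤ Q p)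
    (u : U) : 0 ≤ margU Q u :=
  Finset.sum_nonneg fun _ _ => hQ _

lemma margW_nonneg {U W : Type} [Fintype U] (Q : U × W → ℝ) (hQ : ∀ p, 0 ≤ Q p)
    (w : W) : 0 ≤ margW Q w :=
  Finset.sum_nonneg fun _ _ => hQ _

section Joint

variable {U W : Type} [Fintype U] [Fintype W]

lemma sum_mul_fst (Q : U × W → ℝ) (g : U → ℝ) :
    ∑ p, Q p * g p.1 = ∑ u, margU Q u * g u := by
  simp only [Fintype.sum_prod_type, margU, Finset.sum_mul]

lemma sum_mul_snd (Q : U × W → ℝ) (g : W → ℝ) :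
    ∑ p, Q p * g p.2 = ∑ w, margW Q w * g w := by
  rw [Fintype.sum_prod_type_right]
  simp only [margW, Finset.sum_mul]

lemma sum_margU (Q : U × W → ℝ) : ∑ u, margU Q u = ∑ p, Q p := by
  simpa using (sum_mul_fst Q (fun _ => 1)).symm

lemma sum_margW (Q : U × W → ℝ) : ∑ w, margW Q w = ∑ p, Q p := by
  simpa using (sum_mul_snd Q (fun _ => 1)).symm

/-- Mutual information in nats, with the logarithm of the quotient expanded; symbols of zero mass
contribute `0` on both sides. -/
lemma MI_mul_log_two (Q : U × W → ℝ) (hQ : ∀ p, 0 ≤ Q p) :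
    MI Q * log 2 = ∑ p, Q p * (log (Q p) - log (margU Q p.1) - log (margW Q p.2)) := by
  have h2 : log 2 ≠ 0 := (Real.log_pos (by norm_num)).ne'
  rw [MI, Finset.sum_mul]
  refine Finset.sum_congr rfl fun p _ => ?_
  rcases (hQ p).eq_or_lt with h | h
  · rw [← h]; simp
  · have hu : 0 < margU Q p.1 := h.trans_le (le_margU Q hQ p)
    have hw : 0 < margW Q p.2 := h.trans_le (le_margW Q hQ p)
    rw [logb, Real.log_div h.ne' (mul_pos hu hw).ne', Real.log_mul hu.ne' hw.ne']
    field_simp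
    ring

/-- A joint distribution with positive mutual information is not a point mass. -/
lemma exists_mem_Ioo (Q : U × W → ℝ) (hQ : ∀ p, 0 ≤ Q p) (hQ1 : ∑ p, Q p = 1)
    (hMI : 0 < MI Q) : ∃ a, 0 < Q a ∧ Q a < 1 := by
  by_contra! hcon
  have : MI Q = 0 := by
    refine Finset.sum_eq_zero fun p _ => ?_
    rcases (hQ p).eq_or_lt with h | h
    · rw [← h]; simp
    · have h1 : 1 ≤ Q p := hcon p h
      have hu : margU Q p.1 = 1 := by
        refine le_antisymm ?_ (h1.trans (le_margU Q hQ p))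
        rw [← hQ1, ← sum_margU]
        exact Finset.single_le_sum (fun u _ => margU_nonneg Q hQ u) (Finset.mem_univ p.1)
      have hw : margW Q p.2 = 1 := by
        refine le_antisymm ?_ (h1.trans (le_margW Q hQ p))
        rw [← hQ1, ← sum_margW]
        exact Finset.single_le_sum (fun u _ => margW_nonneg Q hQ u) (Finset.mem_univ p.2)
      have hp : Q p = 1 := le_antisymm (hu ▸ le_margU Q hQ p) h1
      simp [hu, hw, hp]
  exact hMI.ne' this

end Joint

/-! ### Empirical distributions and the change of measure -/

section Emp

variable {U W : Type} [Fintype U] [Fintype W] [DecidableEq U] [DecidableEq W]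

lemma sum_comp_empDist {n : ℕ} (hn : 1 ≤ n) (un : Fin n → U) (wn : Fin n → W) (g : U × W → ℝ) :
    ∑ t, g (un t, wn t) = n * ∑ p, empDist un wn p * g p := by
  have hn0 : (n : ℝ) ≠ 0 := by positivity
  have h : ∀ p, (n : ℝ) * (empDist un wn p * g p) =
      ∑ t ∈ univ.filter (fun t => (un t, wn t) = p), g (un t, wn t) := by
    intro p
    rw [Finset.sum_congr rfl (g := fun _ => g p)
      (fun t ht => by rw [(Finset.mem_filter.1 ht).2]), Finset.sum_const, nsmul_eq_mul]
    unfold empDist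
    simp only [Prod.ext_iff]
    field_simp
  rw [Finset.mul_sum, Finset.sum_congr rfl fun p _ => h p]
  exact (Finset.sum_fiberwise univ (fun t => (un t, wn t)) (fun t => g (un t, wn t))).symm

lemma exists_of_empDist_pos {n : ℕ} {un : Fin n → U} {wn : Fin n → W} {p : U × W}
    (h : 0 < empDist un wn p) : ∃ t, un t = p.1 ∧ wn t = p.2 := by
  by_contra! hcon
  have : empDist un wn p = 0 := by
    unfold empDist
    rw [Finset.filter_false_of_mem (fun t _ ht => hcon t ht.1 ht.2)]
    simp
  exact h.ne' this

/-- Change of measure: on sequences whose type has mutual information at least `r` and is close to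
`q`, the product law `PU^n × PW^n` is exponentially smaller than `q^n`. -/
lemma prob_le_tilted (PU : U → ℝ) (hPU0 : ∀ u, 0 ≤ PU u) (hPU1 : ∑ u, PU u = 1)
    (PW : W → ℝ) (hPW0 : ∀ w, 0 ≤ PW w) (hPW1 : ∑ w, PW w = 1)
    {δ r ε : ℝ} (hε : 0 < ε) (hε2 : ε ≤ 1 / 2) (q : U × W → ℝ) (hq1 : ∑ p, q p = 1)
    (hq : ∀ p, ε ≤ q p) {n : ℕ} (hn : 1 ≤ n) (un : Fin n → U) (wn : Fin n → W)
    (hmem : empDist un wn ∈ Qplus PU PW δ r) (hd : ∑ p, |q p - empDist un wn p| ≤ δ) :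
    (∏ t, PU (un t)) * (∏ t, PW (wn t)) ≤
      (2 : ℝ) ^ (-(n : ℝ) * (r - 2 * δ * logb 2 (1 / ε))) * ∏ t, q (un t, wn t) := by
  have hq0 : ∀ p, 0 < q p := fun p => hε.trans_le (hq p)
  have hprod : 0 < ∏ t, q (un t, wn t) := Finset.prod_pos fun t _ => hq0 _
  have h2 : 0 < log 2 := Real.log_pos (by norm_num)
  by_cases hz : (∀ t, 0 < PU (un t)) ∧ (∀ t, 0 < PW (wn t))
  swap
  · have : (∏ t, PU (un t)) * (∏ t, PW (wn t)) = 0 := by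
      rw [not_and_or, not_forall, not_forall] at hz
      rcases hz with ⟨t, ht⟩ | ⟨t, ht⟩
      · rw [Finset.prod_eq_zero (Finset.mem_univ t) (le_antisymm (not_lt.1 ht) (hPU0 _)), zero_mul]
      · rw [Finset.prod_eq_zero (f := fun t => PW (wn t)) (Finset.mem_univ t)
          (le_antisymm (not_lt.1 ht) (hPW0 _)), mul_zero]
    rw [this]; positivity
  obtain ⟨hu, hw⟩ := hz
  obtain ⟨hQ, hQ1, -, -, hMI⟩ := hmem
  have hab := sum_comp_empDist hn un wn (fun p => log (PU p.1) + log (PW p.2))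
  have hqq := sum_comp_empDist hn un wn (fun p => log (q p))
  have hsupp : ∀ p, 0 < empDist un wn p → 0 < PU p.1 ∧ 0 < PW p.2 := by
    intro p hp
    obtain ⟨t, h1, h2⟩ := exists_of_empDist_pos hp
    exact ⟨h1 ▸ hu t, h2 ▸ hw t⟩
  generalize empDist un wn = Q at *
  have hA := MI_mul_log_two Q hQ
  have hB := gibbs (margU Q) PU (margU_nonneg Q hQ) hPU0 ((sum_margU Q).trans hQ1) hPU1 (by
    intro u hpos
    obtain ⟨w, -, hw⟩ := Finset.exists_lt_of_sum_lt (s := univ) (f := fun _ : W => (0 : ℝ))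
      (g := fun w => Q (u, w)) (by simpa [margU] using hpos)
    exact (hsupp _ hw).1)
  have hC := gibbs (margW Q) PW (margW_nonneg Q hQ) hPW0 ((sum_margW Q).trans hQ1) hPW1 (by
    intro w hpos
    obtain ⟨u, -, hw⟩ := Finset.exists_lt_of_sum_lt (s := univ) (f := fun _ : U => (0 : ℝ))
      (g := fun u => Q (u, w)) (by simpa [margW] using hpos)
    exact (hsupp _ hw).2)
  rw [← sum_mul_fst Q (fun u => log (PU u) - log (margU Q u))] at hB
  rw [← sum_mul_snd Q (fun u => log (PW u) - log (margW Q u))] at hC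
  have hD := kl_le Q q hQ hQ1 hq1 hε hε2 hq hd
  have hL : logb 2 (1 / ε) * log 2 = log (1 / ε) := by
    rw [logb]; field_simp
  have hkey : (r - 2 * δ * logb 2 (1 / ε)) * log 2 ≤
      ∑ p, Q p * log (q p) - ∑ p, Q p * (log (PU p.1) + log (PW p.2)) := by
    have hr : r * log 2 ≤ MI Q * log 2 := mul_le_mul_of_nonneg_right hMI h2.le
    have hsum : ∑ p, Q p * log (q p) - ∑ p, Q p * (log (PU p.1) + log (PW p.2)) =
        ∑ p, Q p * (log (Q p) - log (margU Q p.1) - log (margW Q p.2))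
        - ∑ p, Q p * (log (Q p) - log (q p))
        - ∑ p, Q p * (log (PU p.1) - log (margU Q p.1))
        - ∑ p, Q p * (log (PW p.2) - log (margW Q p.2)) := by
      simp only [← Finset.sum_sub_distrib]
      exact Finset.sum_congr rfl fun p _ => by ring
    rw [hsum, ← hA]
    have : (r - 2 * δ * logb 2 (1 / ε)) * log 2 = r * log 2 - 2 * δ * log (1 / ε) := by
      rw [← hL]; ring
    linarith
  have hUpos : 0 < ∏ t, PU (un t) := Finset.prod_pos fun t _ => hu t
  have hWpos : 0 < ∏ t, PW (wn t) := Finset.prod_pos fun t _ => hw t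
  rw [← Real.log_le_log_iff (mul_pos hUpos hWpos) (by positivity),
    Real.log_mul hUpos.ne' hWpos.ne', Real.log_mul (by positivity) hprod.ne',
    Real.log_rpow (by norm_num), Real.log_prod (fun t _ => (hu t).ne'),
    Real.log_prod (fun t _ => (hw t).ne'), Real.log_prod (fun t _ => (hq0 _).ne'),
    ← Finset.sum_add_distrib, hab, hqq]
  have := mul_le_mul_of_nonneg_left hkey (Nat.cast_nonneg (α := ℝ) n)
  linarith

end Emp

/-! ### Binomial probabilities -/

/-- A binomial variable takes any prescribed value other than `0` and `n` with probability at most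
`1/2`: the neighbouring values `c - 1` and `c + 1` have together at least the probability of
`c`. -/
lemma binomial_le_half {n c : ℕ} (hc : 0 < c) (hcn : c < n) {p q : ℝ} (hp : 0 ≤ p) (hq : 0 ≤ q)
    (hpq : p + q = 1) : (n.choose c : ℝ) * (p ^ c * q ^ (n - c)) ≤ 1 / 2 := by
  obtain ⟨c, rfl⟩ : ∃ d, c = d + 1 := ⟨c - 1, by omega⟩
  obtain ⟨d, rfl⟩ : ∃ d, n = c + 1 + (d + 1) := ⟨n - c - 2, by omega⟩
  set n := c + 1 + (d + 1) with hn
  set f : ℕ → ℝ := fun m => p ^ m * q ^ (n - m) * (n.choose m : ℝ) with hf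
  have hf0 : ∀ m, 0 ≤ f m := fun m => by positivity
  have hsum : ∑ m ∈ range (n + 1), f m = 1 := by
    rw [hf, ← add_pow, hpq, one_pow]
  have hthree : f c + f (c + 1) + f (c + 2) ≤ 1 := by
    rw [← hsum]
    have hsub : ({c, c + 1, c + 2} : Finset ℕ) ⊆ range (n + 1) := by
      intro x hx
      simp only [Finset.mem_insert, Finset.mem_singleton] at hx
      rw [Finset.mem_range]; omega
    have := Finset.sum_le_sum_of_subset_of_nonneg hsub (f := f) (fun m _ _ => hf0 m)
    rw [Finset.sum_insert (by simp), Finset.sum_insert (by simp), Finset.sum_singleton] at this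
    linarith
  have h1 : (n.choose (c + 1) : ℝ) * (c + 1) = n.choose c * (d + 2) := by
    have := Nat.choose_succ_right_eq n c
    rw [show n - c = d + 2 by omega] at this
    exact_mod_cast this
  have h2 : (n.choose (c + 2) : ℝ) * (c + 2) = n.choose (c + 1) * (d + 1) := by
    have := Nat.choose_succ_right_eq n (c + 1)
    rw [show n - (c + 1) = d + 1 by omega] at this
    exact_mod_cast this
  have e0 : f c = p ^ c * q ^ (d + 2) * (n.choose c : ℝ) := by
    simp only [hf]; rw [show n - c = d + 2 by omega]
  have e1 : f (c + 1) = p ^ (c + 1) * q ^ (d + 1) * (n.choose (c + 1) : ℝ) := by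
    simp only [hf]; rw [show n - (c + 1) = d + 1 by omega]
  have e2 : f (c + 2) = p ^ (c + 2) * q ^ d * (n.choose (c + 2) : ℝ) := by
    simp only [hf]; rw [show n - (c + 2) = d by omega]
  have g1 : f c * p * (d + 2) = f (c + 1) * q * (c + 1) := by
    rw [e0, e1]; linear_combination (-(p ^ (c + 1) * q ^ (d + 2))) * h1
  have g2 : f (c + 2) * q * (c + 2) = f (c + 1) * p * (d + 1) := by
    rw [e1, e2]; linear_combination (p ^ (c + 2) * q ^ (d + 1)) * h2
  have hgoal : (n.choose (c + 1) : ℝ) * (p ^ (c + 1) * q ^ (n - (c + 1))) = f (c + 1) := by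
    simp only [hf]; ring
  rw [hgoal]
  rcases hp.eq_or_lt with hp | hp
  · rw [e1, ← hp]; simp
  rcases hq.eq_or_lt with hq | hq
  · rw [e1, ← hq]; simp
  have hc0 : (0 : ℝ) ≤ c := Nat.cast_nonneg c
  have hd0 : (0 : ℝ) ≤ d := Nat.cast_nonneg d
  -- The two neighbour ratios multiply to at least `1/4`, so AM-GM bounds `f (c + 1)` by the sum of
  -- its neighbours.
  have hmul : f c * f (c + 2) * ((c + 2) * (d + 2)) = f (c + 1) ^ 2 * ((c + 1) * (d + 1)) := by
    have hpq0 : p * q ≠ 0 := (mul_pos hp hq).ne'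
    apply mul_right_cancel₀ hpq0
    linear_combination (f (c + 2) * q * (c + 2)) * g1 + (f (c + 1) * q * (c + 1)) * g2
  have h4 : f (c + 1) ^ 2 ≤ 4 * (f c * f (c + 2)) := by
    have hpos : (0 : ℝ) < (c + 2) * (d + 2) := by positivity
    refine le_of_mul_le_mul_right ?_ hpos
    have : f (c + 1) ^ 2 * ((c + 2) * (d + 2)) ≤ f (c + 1) ^ 2 * (4 * ((c + 1) * (d + 1))) :=
      mul_le_mul_of_nonneg_left (by nlinarith [mul_nonneg hc0 hd0]) (sq_nonneg _)
    linarith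
  have h5 : f (c + 1) ≤ f c + f (c + 2) :=
    abs_le_of_sq_le_sq' (by nlinarith [sq_nonneg (f c - f (c + 2))])
      (add_nonneg (hf0 _) (hf0 _)) |>.2
  linarith

/-- The total `q^n`-mass of the sequences in which the symbol `a` occurs exactly `c` times; `q` need not
be normalized. -/
lemma sum_count_eq {A : Type} [Fintype A] [DecidableEq A] (q : A → ℝ) (a : A) (n c : ℕ) :
    ∑ x : Fin n → A, (if (univ.filter fun t => x t = a).card = c then ∏ t, q (x t) else 0) =
      (n.choose c : ℝ) * (q a ^ c * (∑ b ∈ univ.erase a, q b) ^ (n - c)) := by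
  have hS : ∀ S : Finset (Fin n),
      ∑ x ∈ univ.filter (fun x : Fin n → A => (univ.filter fun t => x t = a) = S), ∏ t, q (x t) =
        q a ^ S.card * (∑ b ∈ univ.erase a, q b) ^ (n - S.card) := by
    intro S
    have hset : univ.filter (fun x : Fin n → A => (univ.filter fun t => x t = a) = S) =
        Fintype.piFinset (fun t => if t ∈ S then {a} else univ.erase a) := by
      ext x
      simp only [Finset.mem_filter, Finset.mem_univ, true_and, Fintype.mem_piFinset,
        Finset.ext_iff]
      refine forall_congr' fun t => ?_
      by_cases ht : t ∈ S <;> simp [ht]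
    rw [hset, ← Finset.prod_univ_sum]
    rw [Finset.prod_congr rfl (g := fun t => if t ∈ S then q a else ∑ b ∈ univ.erase a, q b)
      (fun t _ => by split_ifs <;> simp)]
    rw [Finset.prod_ite, Finset.prod_const, Finset.prod_const]
    congr 2
    · simp
    · rw [← Finset.compl_filter, Finset.card_compl]; simp
  rw [← Finset.sum_fiberwise univ (fun x : Fin n → A => univ.filter fun t => x t = a)]
  have hfib : ∀ S : Finset (Fin n),
      ∑ x ∈ univ.filter (fun x : Fin n → A => (univ.filter fun t => x t = a) = S),
        (if (univ.filter fun t => x t = a).card = c then ∏ t, q (x t) else 0) =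
      if S.card = c then q a ^ c * (∑ b ∈ univ.erase a, q b) ^ (n - c) else 0 := by
    intro S
    split_ifs with h
    · rw [← h, ← hS S]
      refine Finset.sum_congr rfl fun x hx => ?_
      rw [(Finset.mem_filter.1 hx).2, if_pos rfl]
    · refine Finset.sum_eq_zero fun x hx => ?_
      rw [(Finset.mem_filter.1 hx).2, if_neg h]
  rw [Finset.sum_congr rfl fun S _ => hfib S, ← Finset.sum_filter, Finset.sum_const, nsmul_eq_mul]
  congr 2
  rw [← Finset.powerset_univ, ← Finset.powersetCard_eq_filter, Finset.card_powersetCard]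
  simp

/-! ### Reductions for finite product laws -/

lemma sum_prod_iid {A : Type} [Fintype A] (n : ℕ) (q : A → ℝ) (hq1 : ∑ a, q a = 1) :
    ∑ x : Fin n → A, ∏ t, q (x t) = 1 := by
  rw [← Fintype.piFinset_univ, ← Finset.prod_univ_sum]
  simp [hq1]

lemma sum_prod_mul_coord {X : Type} [Fintype X] (M : ℕ) (P : X → ℝ) (hP : ∑ x, P x = 1)
    (g : X → ℝ) (m₀ : Fin M) :
    ∑ ws : Fin M → X, (∏ m, P (ws m)) * g (ws m₀) = ∑ x, P x * g x := by
  have h : ∀ ws : Fin M → X, (∏ m, P (ws m)) * g (ws m₀) =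
      ∏ m, (P (ws m) * if m = m₀ then g (ws m) else 1) := by
    intro ws
    rw [Finset.prod_mul_distrib, Finset.prod_ite_eq' univ m₀ (fun m => g (ws m))]
    simp
  rw [Finset.sum_congr rfl fun ws _ => h ws, ← Fintype.piFinset_univ,
    ← Finset.prod_univ_sum (fun _ => univ) (fun m x => P x * if m = m₀ then g x else 1),
    Finset.prod_eq_single m₀]
  · simp
  · intro m _ hm; simp [hm, hP]
  · simp

lemma sum_pairs {U W : Type} [Fintype U] [Fintype W] (n : ℕ) (F : (Fin n → U × W) → ℝ) :
    ∑ un : Fin n → U, ∑ wn : Fin n → W, F (fun t => (un t, wn t)) = ∑ x, F x := by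
  rw [← Fintype.sum_prod_type']
  exact Fintype.sum_equiv (Equiv.arrowProdEquivProdArrow (Fin n) (fun _ => U) (fun _ => W)).symm _ _
    (fun _ => rfl)

/-- Union bound over the codewords and over the elements of the cover. -/
lemma union_bound {U' X : Type} [Fintype U'] [Fintype X] (M K : ℕ) (PU : U' → ℝ)
    (hPU : ∀ u, 0 ≤ PU u) (P : X → ℝ) (hP0 : ∀ x, 0 ≤ P x) (hP : ∑ x, P x = 1)
    (E : U' → X → Prop) (F : Fin K → U' → X → Prop) (hEF : ∀ u x, E u x → ∃ k, F k u x) :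
    ∑ u, ∑ ws : Fin M → X, PU u * (∏ m, P (ws m)) * (if ∃ m, E u (ws m) then 1 else 0) ≤
      M * ∑ k, ∑ u, ∑ x, PU u * P x * (if F k u x then 1 else 0) := by
  have hind : ∀ u (ws : Fin M → X), (if ∃ m, E u (ws m) then (1 : ℝ) else 0) ≤
      ∑ m, ∑ k, if F k u (ws m) then (1 : ℝ) else 0 := by
    intro u ws
    have h0 : ∀ m k, (0 : ℝ) ≤ if F k u (ws m) then (1 : ℝ) else 0 := fun m k => by
      split_ifs <;> norm_num
    split_ifs with h
    · obtain ⟨m, hm⟩ := h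
      obtain ⟨k, hk⟩ := hEF u _ hm
      calc (1 : ℝ) = if F k u (ws m) then (1 : ℝ) else 0 := by rw [if_pos hk]
        _ ≤ ∑ k, if F k u (ws m) then (1 : ℝ) else 0 :=
          Finset.single_le_sum (f := fun k => if F k u (ws m) then (1 : ℝ) else 0)
            (fun k _ => h0 m k) (Finset.mem_univ k)
        _ ≤ _ := Finset.single_le_sum
            (f := fun m => ∑ k, if F k u (ws m) then (1 : ℝ) else 0)
            (fun m _ => Finset.sum_nonneg fun k _ => h0 m k) (Finset.mem_univ m)
    · exact Finset.sum_nonneg fun m _ => Finset.sum_nonneg fun k _ => h0 m k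
  have hu : ∀ u, ∑ ws : Fin M → X, PU u * (∏ m, P (ws m)) * (if ∃ m, E u (ws m) then 1 else 0) ≤
      M * ∑ k, ∑ x, PU u * P x * (if F k u x then 1 else 0) := by
    intro u
    calc _ ≤ ∑ ws : Fin M → X, PU u * (∏ m, P (ws m)) *
          ∑ m, ∑ k, (if F k u (ws m) then (1 : ℝ) else 0) :=
          Finset.sum_le_sum fun ws _ => mul_le_mul_of_nonneg_left (hind u ws)
            (mul_nonneg (hPU u) (Finset.prod_nonneg fun m _ => hP0 _))
      _ = ∑ m : Fin M, PU u * ∑ ws : Fin M → X, (∏ m, P (ws m)) *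
            ∑ k, (if F k u (ws m) then (1 : ℝ) else 0) := by
          simp only [Finset.mul_sum (univ : Finset (Fin M)), Finset.mul_sum (univ : Finset (Fin M → X))]
          rw [Finset.sum_comm]
          exact Finset.sum_congr rfl fun m _ => Finset.sum_congr rfl fun ws _ => by ring
      _ = ∑ m : Fin M, PU u * ∑ x, P x * ∑ k, (if F k u x then (1 : ℝ) else 0) :=
          Finset.sum_congr rfl fun m _ => by
            rw [sum_prod_mul_coord M P hP (fun x => ∑ k, (if F k u x then (1 : ℝ) else 0)) m]
      _ = _ := by
          rw [Finset.sum_const, Finset.card_univ, Fintype.card_fin, nsmul_eq_mul]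
          congr 1
          simp only [Finset.mul_sum]
          rw [Finset.sum_comm]
          exact Finset.sum_congr rfl fun m _ => Finset.sum_congr rfl fun ws _ => by ring
  calc _ ≤ ∑ u, M * ∑ k, ∑ x, PU u * P x * (if F k u x then 1 else 0) :=
        Finset.sum_le_sum fun u _ => hu u
    _ = _ := by rw [← Finset.mul_sum, Finset.sum_comm]

/-! ### The probability of one cover element -/

lemma cell_le_one {U W : Type} [Fintype U] [Fintype W] (q : U × W → ℝ)
    (hq0 : ∀ p, 0 ≤ q p) (hq1 : ∑ p, q p = 1) (n : ℕ)
    (G : (Fin n → U) → (Fin n → W) → Prop) :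
    ∑ un : Fin n → U, ∑ wn : Fin n → W, (∏ t, q (un t, wn t)) *
      (if G un wn then 1 else 0) ≤ 1 := by
  calc _ ≤ ∑ un : Fin n → U, ∑ wn : Fin n → W,
        (fun x : Fin n → U × W => ∏ t, q (x t)) (fun t => (un t, wn t)) := by
        refine Finset.sum_le_sum fun un _ => Finset.sum_le_sum fun wn _ => ?_
        have hpr : 0 ≤ ∏ t, q (un t, wn t) := Finset.prod_nonneg fun t _ => hq0 _
        dsimp only
        split_ifs
        · simp
        · simpa using hpr
    _ = ∑ x : Fin n → U × W, ∏ t, q (x t) :=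
        sum_pairs n (fun x : Fin n → U × W => ∏ t, q (x t))
    _ = 1 := sum_prod_iid n q hq1

section Cell

variable {U W : Type} [Fintype U] [Fintype W] [DecidableEq U] [DecidableEq W]

/-- The event that the type of `(un, wn)` lies in `Qplus PU PW δ r` and within `ℓ¹`-distance `δ` of
`q`. -/
def InCell (PU : U → ℝ) (PW : W → ℝ) (δ r : ℝ) (q : U × W → ℝ) {n : ℕ}
    (un : Fin n → U) (wn : Fin n → W) : Prop :=
  empDist un wn ∈ Qplus PU PW δ r ∧ ∑ p, |q p - empDist un wn p| ≤ δ

/-- If `nδ < 1`, the `q^n`-probability of the types in `Qplus` that are `δ`-close to `q` is at most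
`1/2`. -/
lemma cell_le_half (PU : U → ℝ) (PW : W → ℝ) {δ r : ℝ} (hr : 0 < r) (q : U × W → ℝ)
    (hq0 : ∀ p, 0 ≤ q p) (hq1 : ∑ p, q p = 1) {n : ℕ} (hn : 1 ≤ n) (hnδ : n * δ < 1) :
    ∑ un : Fin n → U, ∑ wn : Fin n → W, (∏ t, q (un t, wn t)) *
      (if InCell PU PW δ r q un wn then 1 else 0)
      ≤ 1 / 2 := by
  have hn0 : (0 : ℝ) < n := by exact_mod_cast hn
  by_cases hex : ∃ (un : Fin n → U) (wn : Fin n → W), InCell PU PW δ r q un wn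
  swap
  · push Not at hex
    refine le_of_eq_of_le (Finset.sum_eq_zero fun un _ => Finset.sum_eq_zero fun wn _ => ?_)
      (by norm_num : (0 : ℝ) ≤ 1 / 2)
    rw [if_neg (hex un wn), mul_zero]
  obtain ⟨u₀, w₀, hm₀, hd₀⟩ := hex
  obtain ⟨a, ha0, ha1⟩ := exists_mem_Ioo _ hm₀.1 hm₀.2.1 (hr.trans_le hm₀.2.2.2.2)
  obtain ⟨cnt, hcnt⟩ : ∃ cnt : (Fin n → U × W) → ℕ,
      ∀ x, cnt x = (univ.filter fun t => x t = a).card := ⟨_, fun _ => rfl⟩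
  have hemp : ∀ (un : Fin n → U) (wn : Fin n → W),
      empDist un wn a = (cnt fun t => (un t, wn t)) / n := by
    intro un wn
    rw [empDist, hcnt]
    congr 3
    ext t
    simp [Prod.ext_iff]
  obtain ⟨c, hc⟩ : ∃ c, c = cnt fun t => (u₀ t, w₀ t) := ⟨_, rfl⟩
  rw [hemp, ← hc] at ha0 ha1
  have hc0 : 0 < c := by
    rcases Nat.eq_zero_or_pos c with h | h
    · rw [h] at ha0; simp at ha0
    · exact h
  have hcn : c < n := by
    rw [div_lt_one hn0] at ha1; exact_mod_cast ha1
  -- Two types in the ball differ by at most `δ < 1 / n` at `a`, so their counts there agree.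
  have hsame : ∀ (un : Fin n → U) (wn : Fin n → W), empDist un wn ∈ Qplus PU PW δ r →
      ∑ p, |q p - empDist un wn p| ≤ δ → (cnt fun t => (un t, wn t)) = c := by
    intro un wn hm hd
    have h1 := abs_sub_le_half _ q hm.2.1 hq1 hd a
    have h2 := abs_sub_le_half _ q hm₀.2.1 hq1 hd₀ a
    rw [hemp, abs_le] at h1 h2
    rw [← hc] at h2
    generalize (cnt fun t => (un t, wn t)) = c' at h1 ⊢
    have hx : (c' : ℝ) = c' / n * n := by field_simp
    have hy : (c : ℝ) = c / n * n := by field_simp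
    have h3 : (c' : ℝ) < c + 1 := by
      have : (c' : ℝ) / n * n ≤ (c / n + δ) * n :=
        mul_le_mul_of_nonneg_right (by linarith) hn0.le
      linarith
    have h4 : (c : ℝ) < c' + 1 := by
      have : (c : ℝ) / n * n ≤ (c' / n + δ) * n :=
        mul_le_mul_of_nonneg_right (by linarith) hn0.le
      linarith
    have h3' : c' < c + 1 := by exact_mod_cast h3
    have h4' : c < c' + 1 := by exact_mod_cast h4
    omega
  obtain ⟨F, hF⟩ : ∃ F : (Fin n → U × W) → ℝ,
      ∀ x, F x = if cnt x = c then ∏ t, q (x t) else 0 := ⟨_, fun _ => rfl⟩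
  calc _ ≤ ∑ un : Fin n → U, ∑ wn : Fin n → W,
        F (fun t => (un t, wn t)) := by
        refine Finset.sum_le_sum fun un _ => Finset.sum_le_sum fun wn _ => ?_
        have hpr : 0 ≤ ∏ t, q (un t, wn t) := Finset.prod_nonneg fun t _ => hq0 _
        rw [hF]
        split_ifs with h1 h2 h2
        · simp
        · exact absurd (hsame un wn h1.1 h1.2) h2
        · simpa using hpr
        · simp
    _ = ∑ x : Fin n → U × W, F x := sum_pairs n F
    _ = (n.choose c : ℝ) * (q a ^ c * (∑ b ∈ univ.erase a, q b) ^ (n - c)) := by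
        rw [← sum_count_eq q a n c]
        simp only [hF, hcnt]
    _ ≤ 1 / 2 := binomial_le_half hc0 hcn (hq0 a) (Finset.sum_nonneg fun b _ => hq0 b) (by
        rw [Finset.add_sum_erase _ _ (Finset.mem_univ a), hq1])

/-- The contribution of one cover element, multiplied by the number of codewords. -/
lemma cell_bound (PU : U → ℝ) (hPU0 : ∀ u, 0 ≤ PU u) (hPU1 : ∑ u, PU u = 1)
    (PW : W → ℝ) (hPW0 : ∀ w, 0 ≤ PW w) (hPW1 : ∑ w, PW w = 1)
    {R η δ ε : ℝ} (hR : 0 ≤ R) (hη : 0 < η) (hδ : 0 < δ) (hε : 0 < ε) (hε2 : ε ≤ 1 / 2)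
    (q : U × W → ℝ) (hq1 : ∑ p, q p = 1) (hq : ∀ p, ε ≤ q p) {n : ℕ} (hn : 1 ≤ n) :
    (Nat.ceil ((2 : ℝ) ^ ((n : ℝ) * R)) : ℝ) * ∑ un : Fin n → U, ∑ wn : Fin n → W,
      (∏ t, PU (un t)) * (∏ t, PW (wn t)) *
      (if InCell PU PW δ (R + η) q un wn then 1 else 0)
      ≤ (2 : ℝ) ^ (-(n : ℝ) * (η - 3 * δ * logb 2 (1 / ε))) := by
  have hq0 : ∀ p, 0 ≤ q p := fun p => hε.le.trans (hq p)
  have hn0 : (0 : ℝ) < n := by exact_mod_cast hn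
  set L := logb 2 (1 / ε) with hL
  have hL1 : 1 ≤ L := by
    rw [hL, Real.le_logb_iff_rpow_le (by norm_num) (by positivity), Real.rpow_one,
      le_div_iff₀ hε]
    linarith
  set C := ∑ un : Fin n → U, ∑ wn : Fin n → W, (∏ t, q (un t, wn t)) *
      (if InCell PU PW δ (R + η) q un wn then (1 : ℝ) else 0) with hC
  have hstep : ∑ un : Fin n → U, ∑ wn : Fin n → W,
      (∏ t, PU (un t)) * (∏ t, PW (wn t)) *
      (if InCell PU PW δ (R + η) q un wn then (1 : ℝ) else 0) ≤ (2 : ℝ) ^ (-(n : ℝ) * (R + η - 2 * δ * L)) * C := by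
    rw [hC, Finset.mul_sum]
    refine Finset.sum_le_sum fun un _ => ?_
    rw [Finset.mul_sum]
    refine Finset.sum_le_sum fun wn _ => ?_
    split_ifs with h
    · rw [mul_one, mul_one]
      exact prob_le_tilted PU hPU0 hPU1 PW hPW0 hPW1 hε hε2 q hq1 hq hn un wn h.1 h.2
    · simp
  have hceil : (Nat.ceil ((2 : ℝ) ^ ((n : ℝ) * R)) : ℝ) ≤ 2 * (2 : ℝ) ^ ((n : ℝ) * R) := by
    have h1 : (1 : ℝ) ≤ (2 : ℝ) ^ ((n : ℝ) * R) :=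
      Real.one_le_rpow (by norm_num) (by positivity)
    have := Nat.ceil_lt_add_one (zero_le_one.trans h1)
    linarith
  have hC2 : 2 * C ≤ (2 : ℝ) ^ ((n : ℝ) * δ * L) := by
    rcases le_or_gt 1 ((n : ℝ) * δ * L) with h | h
    · have h1 : C ≤ 1 := cell_le_one q hq0 hq1 n _
      have h2 : (2 : ℝ) ^ (1 : ℝ) ≤ (2 : ℝ) ^ ((n : ℝ) * δ * L) :=
        Real.rpow_le_rpow_of_exponent_le (by norm_num) h
      rw [Real.rpow_one] at h2
      linarith
    · have hnδ : (n : ℝ) * δ < 1 :=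
        (le_mul_of_one_le_right (by positivity) hL1).trans_lt h
      have h1 : C ≤ 1 / 2 := cell_le_half PU PW (by linarith) q hq0 hq1 hn hnδ
      have h2 : (1 : ℝ) ≤ (2 : ℝ) ^ ((n : ℝ) * δ * L) :=
        Real.one_le_rpow (by norm_num) (by positivity)
      linarith
  calc _ ≤ (Nat.ceil ((2 : ℝ) ^ ((n : ℝ) * R)) : ℝ) *
        ((2 : ℝ) ^ (-(n : ℝ) * (R + η - 2 * δ * L)) * C) :=
        mul_le_mul_of_nonneg_left hstep (Nat.cast_nonneg _)
    _ ≤ (2 * (2 : ℝ) ^ ((n : ℝ) * R)) * ((2 : ℝ) ^ (-(n : ℝ) * (R + η - 2 * δ * L)) * C) := by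
        refine mul_le_mul_of_nonneg_right hceil (mul_nonneg (by positivity) ?_)
        exact Finset.sum_nonneg fun un _ => Finset.sum_nonneg fun wn _ =>
          mul_nonneg (Finset.prod_nonneg fun t _ => hq0 _) (by split_ifs <;> norm_num)
    _ = (2 : ℝ) ^ ((n : ℝ) * R) * (2 : ℝ) ^ (-(n : ℝ) * (R + η - 2 * δ * L)) * (2 * C) := by ring
    _ ≤ (2 : ℝ) ^ ((n : ℝ) * R) * (2 : ℝ) ^ (-(n : ℝ) * (R + η - 2 * δ * L)) *
        (2 : ℝ) ^ ((n : ℝ) * δ * L) := mul_le_mul_of_nonneg_left hC2 (by positivity)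
    _ = _ := by
        rw [← Real.rpow_add (by norm_num), ← Real.rpow_add (by norm_num)]
        congr 1
        ring

end Cell

theorem stmt_6 (U W : Type) [Fintype U] [Fintype W] [DecidableEq U] [DecidableEq W]
    (PU : U → ℝ) (hPU0 : ∀ u, 0 ≤ PU u) (hPU1 : ∑ u, PU u = 1)
    (PW : W → ℝ) (hPW0 : ∀ w, 0 ≤ PW w) (hPW1 : ∑ w, PW w = 1)
    (R η δ : ℝ) (hR : 0 ≤ R) (hη : 0 < η) (hδ : 0 < δ)
    (hδη : 3 * δ * logb 2 (4 * ((Fintype.card U * Fintype.card W : ℕ) - 1) / δ) < η)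
    (Ktil : ℕ) (Qt : Fin Ktil → U × W → ℝ)
    (hQt : ∀ k, (∀ p, 0 ≤ Qt k p) ∧ (∑ p, Qt k p = 1) ∧
      (∀ p, δ / (4 * ((Fintype.card U * Fintype.card W : ℕ) - 1)) ≤ Qt k p))
    (hcover : ∀ Q ∈ Qplus PU PW δ (R + η), ∃ k, ∑ p, |Qt k p - Q p| ≤ δ) :
    (∀ n : ℕ, 1 ≤ n →
      (∑ un : Fin n → U, ∑ ws : Fin (Nat.ceil ((2:ℝ) ^ ((n:ℝ) * R))) → Fin n → W,
        (∏ t, PU (un t)) * (∏ m, ∏ t, PW (ws m t)) *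
          (if ∃ m, empDist un (ws m) ∈ Qplus PU PW δ (R + η) then 1 else 0))
      ≤ (Ktil : ℝ) *
        (2:ℝ) ^ (-(n:ℝ) * (η - 3 * δ *
          logb 2 (4 * ((Fintype.card U * Fintype.card W : ℕ) - 1) / δ))))
    ∧ Tendsto (fun n : ℕ => (Ktil : ℝ) *
        (2:ℝ) ^ (-(n:ℝ) * (η - 3 * δ *
          logb 2 (4 * ((Fintype.card U * Fintype.card W : ℕ) - 1) / δ))))
        atTop (nhds 0) := by
  have hexp : 0 < η - 3 * δ * logb 2 (4 * ((Fintype.card U * Fintype.card W : ℕ) - 1) / δ) := by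
    linarith
  constructor
  · intro n hn
    set N := Fintype.card U * Fintype.card W with hN
    have hunion := union_bound (Nat.ceil ((2:ℝ) ^ ((n:ℝ) * R))) Ktil
      (fun un : Fin n → U => ∏ t, PU (un t)) (fun un => Finset.prod_nonneg fun t _ => hPU0 _)
      (fun wn : Fin n → W => ∏ t, PW (wn t)) (fun wn => Finset.prod_nonneg fun t _ => hPW0 _)
      (sum_prod_iid n PW hPW1)
      (fun un wn => empDist un wn ∈ Qplus PU PW δ (R + η))
      (fun k un wn => InCell PU PW δ (R + η) (Qt k) un wn)
      (fun un wn h => by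
        obtain ⟨k, hk⟩ := hcover _ h
        exact ⟨k, h, hk⟩)
    refine hunion.trans ?_
    rw [Finset.mul_sum]
    have hcell : ∀ k : Fin Ktil, (Nat.ceil ((2:ℝ) ^ ((n:ℝ) * R)) : ℝ) *
        ∑ un : Fin n → U, ∑ wn : Fin n → W, (∏ t, PU (un t)) * (∏ t, PW (wn t)) *
          (if InCell PU PW δ (R + η) (Qt k) un wn then 1 else 0) ≤
        (2:ℝ) ^ (-(n:ℝ) * (η - 3 * δ * logb 2 (4 * ((N : ℕ) - 1) / δ))) := by
      intro k
      obtain ⟨-, hq1, hq⟩ := hQt k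
      by_cases hN2 : 2 ≤ N
      · have hN2' : (2 : ℝ) ≤ N := by exact_mod_cast hN2
        have hε : 0 < δ / (4 * ((N : ℝ) - 1)) := div_pos hδ (by linarith)
        have hε2 : δ / (4 * ((N : ℝ) - 1)) ≤ 1 / 2 := by
          have h1 : (N : ℝ) * (δ / (4 * ((N : ℝ) - 1))) ≤ 1 := by
            have := Finset.card_nsmul_le_sum univ (Qt k) _ (fun p _ => hq p)
            rwa [Finset.card_univ, Fintype.card_prod, ← hN, nsmul_eq_mul, hq1] at this
          have h2 := mul_le_mul_of_nonneg_right hN2' hε.le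
          linarith
        have := cell_bound PU hPU0 hPU1 PW hPW0 hPW1 hR hη hδ hε hε2 (Qt k) hq1 hq hn
        rwa [one_div_div] at this
      · -- With at most one symbol every distribution is a point mass, so `Qplus` is empty.
        have hemp : ∀ Q, Q ∉ Qplus PU PW δ (R + η) := by
          intro Q hQ
          obtain ⟨a, -, ha⟩ := exists_mem_Ioo Q hQ.1 hQ.2.1
            (lt_of_lt_of_le (by linarith) hQ.2.2.2.2)
          have hsub : Subsingleton (U × W) := by
            rw [← Fintype.card_le_one_iff_subsingleton, Fintype.card_prod]; omega
          have h1 := hQ.2.1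
          rw [Fintype.sum_subsingleton _ a] at h1
          linarith
        simp only [InCell, hemp, false_and, if_false, mul_zero, Finset.sum_const_zero]
        positivity
    calc _ ≤ ∑ _k : Fin Ktil,
          (2:ℝ) ^ (-(n:ℝ) * (η - 3 * δ * logb 2 (4 * ((N : ℕ) - 1) / δ))) :=
          Finset.sum_le_sum fun k _ => hcell k
      _ = _ := by rw [Finset.sum_const, Finset.card_univ, Fintype.card_fin, nsmul_eq_mul]
  · generalize η - 3 * δ * logb 2 (4 * ((Fintype.card U * Fintype.card W : ℕ) - 1) / δ) = c at hexp
    have h : ∀ n : ℕ, (2:ℝ) ^ (-(n:ℝ) * c) = ((2:ℝ) ^ (-c)) ^ n := by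
      intro n
      rw [← Real.rpow_natCast, ← Real.rpow_mul (by norm_num)]
      congr 1
      ring
    simp only [h]
    have := (tendsto_pow_atTop_nhds_zero_of_lt_one (r := (2:ℝ) ^ (-c)) (by positivity)
      (Real.rpow_lt_one_of_one_lt_of_neg (by norm_num) (by linarith))).const_mul (Ktil : ℝ)
    simpa using this

end
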